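/- arXiv:2411.15038 — 2 statements merged into one kernel-verified Lean document; each statement's English description precedes it below -/
import Mathlib

section
/- Let γ : [0,1] → ℝ² \ {0} be a C¹ curve and let A(p) denote the traceless symmetric matrix [[p₁, p₂],[p₂, −p₁]]. Let ω be the connection 1-form of the cone metric, ω(p; X) = (1/(2r²))·Xᵀ·g(p)·(−p₂, p₁). Suppose θ : [0,1] → ℝ is C¹ and solves the parallel transport equation θ'(t) = ω(γ(t); γ'(t)) for all t, with initial condition that (cos θ(0), sin θ(0)) is an eigenvector of A(γ(0)) with eigenvalue ‖γ(0)‖. Then for every t ∈ [0,1], the vector (cos θ(t), sin θ(t)) is a unit eigenvector of A(γ(t)) with eigenvalue ‖γ(t)‖. -/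
open Real Matrix

/-- The cone metric on `ℝ² \ {0}`. -/
noncomputable def coneMetric (x y : ℝ) : Matrix (Fin 2) (Fin 2) ℝ :=
  !![1 + 3 * x ^ 2 / (x ^ 2 + y ^ 2), 3 * x * y / (x ^ 2 + y ^ 2);
     3 * x * y / (x ^ 2 + y ^ 2), 1 + 3 * y ^ 2 / (x ^ 2 + y ^ 2)]

/-- The connection 1-form of the cone metric:
`ω(p; X) = (1/(2r²))·Xᵀ·g(p)·(−p₂, p₁)`. -/
noncomputable def connForm (p : ℝ × ℝ) (X : ℝ × ℝ) : ℝ :=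
  (1 / (2 * (p.1 ^ 2 + p.2 ^ 2))) *
    (![X.1, X.2] ⬝ᵥ coneMetric p.1 p.2 *ᵥ ![-p.2, p.1])

/-- The traceless symmetric matrix associated with a point `p ∈ ℝ²`. -/
def symMat (p : ℝ × ℝ) : Matrix (Fin 2) (Fin 2) ℝ :=
  !![p.1, p.2; p.2, -p.1]

/-!
Identify `ℝ²` with `ℂ`, writing `z` for the point `γ(t)` and `v = e^{iθ}`. Then
`A(z) v = z e^{-iθ} = w v` with `w = z e^{-2iθ}`, so `v` is an eigenvector exactly when `w` is real,
and `|w| = |z|`. Since the cone metric is the identity in the angular direction,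
`ω(z; z') = Im(z'/z) / 2`, so parallel transport leaves `w'/w = z'/z - 2iθ' = Re(z'/z)`. A
nonvanishing curve whose derivative is always a real multiple of its position keeps its direction,
so `w/|w|` is constant.
-/

open scoped Topology

section Direction

variable {E : Type*} [NormedAddCommGroup E] [NormedSpace ℝ E] {f : ℝ → E} {s : Set ℝ}

/- To first order `f` moves along the ray through `f t`, on which the norm is linear; hence no
smoothness of the norm of `E` is involved. -/
lemma hasDerivWithinAt_norm_of_smul_self {a t : ℝ} (hf : HasDerivWithinAt f (a • f t) s t) :
    HasDerivWithinAt (fun u => ‖f u‖) (a * ‖f t‖) s t := by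
  rw [hasDerivWithinAt_iff_isLittleO] at hf ⊢
  have hpos : ∀ᶠ u in 𝓝[s] t, 0 < 1 + (u - t) * a := by
    have hcont : ContinuousAt (fun u => 1 + (u - t) * a) t := by fun_prop
    exact (hcont.eventually_const_lt (by simp)).filter_mono nhdsWithin_le_nhds
  refine (Asymptotics.IsBigO.of_bound' (hpos.mono fun u hu => ?_)).trans_isLittleO hf
  have hlin : f t + (u - t) • a • f t = (1 + (u - t) * a) • f t := by module
  calc ‖‖f u‖ - ‖f t‖ - (u - t) • (a * ‖f t‖)‖
      = |‖f u‖ - ‖f t + (u - t) • a • f t‖| := by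
        rw [hlin, norm_smul_of_nonneg hu.le, Real.norm_eq_abs, smul_eq_mul]
        ring_nf
    _ ≤ ‖f u - (f t + (u - t) • a • f t)‖ := abs_norm_sub_norm_le _ _
    _ = ‖f u - f t - (u - t) • a • f t‖ := by rw [sub_add_eq_sub_sub]

lemma hasDerivWithinAt_inv_norm_smul_of_smul_self {a t : ℝ} (hft : f t ≠ 0)
    (hf : HasDerivWithinAt f (a • f t) s t) :
    HasDerivWithinAt (fun u => ‖f u‖⁻¹ • f u) 0 s t := by
  have hnorm : ‖f t‖ ≠ 0 := norm_ne_zero_iff.mpr hft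
  refine (((hasDerivWithinAt_norm_of_smul_self hf).fun_inv hnorm).fun_smul hf).congr_deriv ?_
  rw [smul_smul, ← add_smul]
  have hcancel : ‖f t‖⁻¹ * a + -(a * ‖f t‖) / ‖f t‖ ^ 2 = 0 := by
    field_simp
    ring
  rw [hcancel, zero_smul]

theorem inv_norm_smul_eq_of_hasDerivWithinAt_smul_self {a : ℝ → ℝ} (hs : Convex ℝ s)
    (hf0 : ∀ t ∈ s, f t ≠ 0) (hf : ∀ t ∈ s, HasDerivWithinAt f (a t • f t) s t)
    {t₀ t : ℝ} (ht₀ : t₀ ∈ s) (ht : t ∈ s) :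
    ‖f t‖⁻¹ • f t = ‖f t₀‖⁻¹ • f t₀ := by
  have hder (u : ℝ) (hu : u ∈ s) : HasDerivWithinAt (fun u => ‖f u‖⁻¹ • f u) 0 s u :=
    hasDerivWithinAt_inv_norm_smul_of_smul_self (hf0 u hu) (hf u hu)
  have hle := hs.norm_image_sub_le_of_norm_hasDerivWithin_le hder (fun _ _ => norm_zero.le) ht₀ ht
  rwa [zero_mul, norm_le_zero_iff, sub_eq_zero] at hle

end Direction

/-- The identification of the plane with `ℂ`, `(x, y) ↦ x + iy`. -/
noncomputable abbrev toComplex : (ℝ × ℝ) ≃L[ℝ] ℂ := Complex.equivRealProdCLM.symm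

lemma norm_toComplex (p : ℝ × ℝ) : ‖toComplex p‖ = √(p.1 ^ 2 + p.2 ^ 2) := by
  simp [Complex.norm_eq_sqrt_sq_add_sq]

lemma coneMetric_mulVec_angular (x y : ℝ) : coneMetric x y *ᵥ ![-y, x] = ![-y, x] := by
  rw [coneMetric, cons_mulVec, cons_mulVec, empty_mulVec, vec2_dotProduct', vec2_dotProduct']
  exact vec2_eq (by ring) (by ring)

lemma connForm_eq_im_div (p X : ℝ × ℝ) : connForm p X = (toComplex X / toComplex p).im / 2 := by
  rw [connForm, coneMetric_mulVec_angular]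
  simp only [one_div, _root_.mul_inv, vec2_dotProduct', Complex.div_im, Complex.normSq_apply,
    Complex.equivRealProdCLM_symm_apply_re, Complex.equivRealProdCLM_symm_apply_im]
  ring

/-- The number `A(p) v / v = z e^{-2iθ}`, where `z` is the point `p` and `v = e^{iθ}`, both taken in
`ℂ`. The unit vector `v` is an eigenvector of `A(p)` exactly when this number is real; it is then
the eigenvalue. -/
noncomputable def eigenRatio (p : ℝ × ℝ) (θ : ℝ) : ℂ :=
  toComplex p * Complex.exp (↑(-2 * θ) * Complex.I)

lemma norm_eigenRatio (p : ℝ × ℝ) (θ : ℝ) :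
    ‖eigenRatio p θ‖ = √(p.1 ^ 2 + p.2 ^ 2) := by
  rw [eigenRatio, norm_mul, Complex.norm_exp_ofReal_mul_I, mul_one, norm_toComplex]

lemma eigenRatio_ne_zero {p : ℝ × ℝ} (hp : p ≠ 0) (θ : ℝ) : eigenRatio p θ ≠ 0 :=
  mul_ne_zero (toComplex.map_ne_zero_iff.mpr hp) (Complex.exp_ne_zero _)

lemma symMat_mulVec_cos_sin (p : ℝ × ℝ) (θ : ℝ) :
    symMat p *ᵥ ![cos θ, sin θ] =
      ![(eigenRatio p θ * Complex.exp (θ * Complex.I)).re,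
        (eigenRatio p θ * Complex.exp (θ * Complex.I)).im] := by
  have hconj : eigenRatio p θ * Complex.exp (θ * Complex.I) =
      toComplex p * Complex.exp (↑(-θ) * Complex.I) := by
    rw [eigenRatio, mul_assoc, ← Complex.exp_add]
    push_cast
    ring_nf
  rw [hconj, Complex.mul_re, Complex.mul_im, Complex.exp_ofReal_mul_I_re,
    Complex.exp_ofReal_mul_I_im, cos_neg, sin_neg, Complex.equivRealProdCLM_symm_apply_re,
    Complex.equivRealProdCLM_symm_apply_im, symMat, cons_mulVec, cons_mulVec, empty_mulVec,
    vec2_dotProduct', vec2_dotProduct']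
  exact vec2_eq (by ring) (by ring)

lemma symMat_mulVec_eq_smul_iff (p : ℝ × ℝ) (θ μ : ℝ) :
    symMat p *ᵥ ![cos θ, sin θ] = μ • ![cos θ, sin θ] ↔ eigenRatio p θ = μ := by
  rw [symMat_mulVec_cos_sin, ← mul_left_inj' (Complex.exp_ne_zero (θ * Complex.I)),
    Complex.ext_iff, Complex.re_ofReal_mul, Complex.im_ofReal_mul, Complex.exp_ofReal_mul_I_re,
    Complex.exp_ofReal_mul_I_im]
  simp

lemma symMat_mulVec_eq_mul_norm_smul_iff {p : ℝ × ℝ} (hp : p ≠ 0) (θ σ : ℝ) :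
    symMat p *ᵥ ![cos θ, sin θ] = (σ * √(p.1 ^ 2 + p.2 ^ 2)) • ![cos θ, sin θ] ↔
      ‖eigenRatio p θ‖⁻¹ • eigenRatio p θ = σ := by
  have hnorm : ‖eigenRatio p θ‖ ≠ 0 := norm_ne_zero_iff.mpr (eigenRatio_ne_zero hp θ)
  rw [symMat_mulVec_eq_smul_iff, ← norm_eigenRatio p θ, inv_smul_eq_iff₀ hnorm,
    Complex.real_smul, mul_comm σ, Complex.ofReal_mul]

lemma hasDerivWithinAt_eigenRatio {γ : ℝ → ℝ × ℝ} {γ' : ℝ × ℝ} {θ : ℝ → ℝ} {s : Set ℝ}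
    {t : ℝ} (hγ0 : γ t ≠ 0) (hγ : HasDerivWithinAt γ γ' s t)
    (hθ : HasDerivWithinAt θ (connForm (γ t) γ') s t) :
    HasDerivWithinAt (fun u => eigenRatio (γ u) (θ u))
      ((toComplex γ' / toComplex (γ t)).re • eigenRatio (γ t) (θ t)) s t := by
  have hz : HasDerivWithinAt (fun u => toComplex (γ u)) (toComplex γ') s t :=
    toComplex.hasFDerivAt.comp_hasDerivWithinAt t hγ
  have hexp := ((hθ.const_mul (-2)).ofReal_comp.mul_const Complex.I).cexp
  refine (hz.fun_mul hexp).congr_deriv ?_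
  have hz0 : toComplex (γ t) ≠ 0 := toComplex.map_ne_zero_iff.mpr hγ0
  rw [connForm_eq_im_div, eigenRatio, Complex.real_smul]
  set q := toComplex γ' / toComplex (γ t) with hq
  have hz' : toComplex γ' = (q.re + q.im * Complex.I) * toComplex (γ t) := by
    rw [Complex.re_add_im, hq, div_mul_cancel₀ _ hz0]
  rw [hz']
  push_cast
  ring

/- The eigenvalues of `A(p)` are `±‖p‖`, so `σ = ±1`. -/
theorem parallel_transport_preserves_eigenvectors_general
    {γ γ' : ℝ → ℝ × ℝ} {θ : ℝ → ℝ} {s : Set ℝ} {σ t₀ : ℝ} (hs : Convex ℝ s)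
    (hγ0 : ∀ t ∈ s, γ t ≠ 0)
    (hγ : ∀ t ∈ s, HasDerivWithinAt γ (γ' t) s t)
    (hθ : ∀ t ∈ s, HasDerivWithinAt θ (connForm (γ t) (γ' t)) s t)
    (ht₀ : t₀ ∈ s)
    (hinit : symMat (γ t₀) *ᵥ ![cos (θ t₀), sin (θ t₀)] =
      (σ * √((γ t₀).1 ^ 2 + (γ t₀).2 ^ 2)) • ![cos (θ t₀), sin (θ t₀)]) :
    ∀ t ∈ s, symMat (γ t) *ᵥ ![cos (θ t), sin (θ t)] =
      (σ * √((γ t).1 ^ 2 + (γ t).2 ^ 2)) • ![cos (θ t), sin (θ t)] := by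
  intro t ht
  have hdir := inv_norm_smul_eq_of_hasDerivWithinAt_smul_self hs
    (fun u hu => eigenRatio_ne_zero (hγ0 u hu) (θ u))
    (fun u hu => hasDerivWithinAt_eigenRatio (hγ0 u hu) (hγ u hu) (hθ u hu)) ht₀ ht
  rw [symMat_mulVec_eq_mul_norm_smul_iff (hγ0 t₀ ht₀)] at hinit
  rw [symMat_mulVec_eq_mul_norm_smul_iff (hγ0 t ht)]
  exact hdir.trans hinit

/-- parallel transport with respect to the cone metric maps
eigenvectors to eigenvectors: if the angle `θ` of a unit vector field along `γ`
solves `θ' = ω(γ; γ')` and `(cos θ(0), sin θ(0))` is an eigenvector of `A(γ(0))`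
with eigenvalue `‖γ(0)‖`, then `(cos θ(t), sin θ(t))` is an eigenvector of
`A(γ(t))` with eigenvalue `‖γ(t)‖` for all `t ∈ [0,1]`. -/
theorem parallel_transport_preserves_eigenvectors
    (γ γ' : ℝ → ℝ × ℝ) (θ : ℝ → ℝ)
    (hγ0 : ∀ t ∈ Set.Icc (0 : ℝ) 1, γ t ≠ 0)
    (hγder : ∀ t ∈ Set.Icc (0 : ℝ) 1, HasDerivAt γ (γ' t) t)
    (hγ'cont : ContinuousOn γ' (Set.Icc 0 1))
    (hθder : ∀ t ∈ Set.Icc (0 : ℝ) 1, HasDerivAt θ (connForm (γ t) (γ' t)) t)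
    (hinit : symMat (γ 0) *ᵥ ![Real.cos (θ 0), Real.sin (θ 0)] =
      Real.sqrt ((γ 0).1 ^ 2 + (γ 0).2 ^ 2) • ![Real.cos (θ 0), Real.sin (θ 0)]) :
    ∀ t ∈ Set.Icc (0 : ℝ) 1,
      symMat (γ t) *ᵥ ![Real.cos (θ t), Real.sin (θ t)] =
        Real.sqrt ((γ t).1 ^ 2 + (γ t).2 ^ 2) • ![Real.cos (θ t), Real.sin (θ t)] := by
  simpa only [one_mul] using parallel_transport_preserves_eigenvectors_general (σ := 1)
    (convex_Icc 0 1) hγ0 (fun t ht => (hγder t ht).hasDerivWithinAt)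
    (fun t ht => (hθder t ht).hasDerivWithinAt) (Set.left_mem_Icc.mpr zero_le_one)
    (by simpa only [one_mul] using hinit)
end

section
/- Let h be the pullback metric on the branched double cover, given in polar coordinates by diag(4, 4r²), i.e. h(p) = (DF(p))ᵀ·DF(p) for F(x,y) = ((x²−y²)/r, 2xy/r, √3·r), and define the connection 1-form ω_h(p; X) = (1/(4r²))·Xᵀ·h(p)·(−p₂, p₁). Let γ : [0,1] → ℝ² \ {0} be a C¹ curve with C¹ angle lift φ, i.e. γ(t) = ‖γ(t)‖·(cos φ(t), sin φ(t)). Then ∫₀¹ ω_h(γ(t); γ'(t)) dt = φ(1) − φ(0); in particular ω_h = dφ, and for a closed curve γ the geometric phase equals 2π times the (integer) winding number of γ around 0, so the holonomy of h on ℝ² \ {0} is trivial. -/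
open Real Matrix intervalIntegral

/-- The composition `f ∘ π` of the branched double cover with the cone
parametrization: `F(x,y) = ((x²−y²)/r, 2xy/r, √3·r)`. -/
noncomputable def coverPar : ℝ × ℝ → (Fin 3 → ℝ) :=
  fun p => ![(p.1 ^ 2 - p.2 ^ 2) / Real.sqrt (p.1 ^ 2 + p.2 ^ 2),
             2 * p.1 * p.2 / Real.sqrt (p.1 ^ 2 + p.2 ^ 2),
             Real.sqrt 3 * Real.sqrt (p.1 ^ 2 + p.2 ^ 2)]

/-- The connection 1-form on the branched double cover:
`ω_h(p; X) = (1/(4r²))·Xᵀ·h(p)·(−p₂, p₁)`, where `h(p) = (DF(p))ᵀ·DF(p)`. -/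
noncomputable def connFormCover (p : ℝ × ℝ) (X : ℝ × ℝ) : ℝ :=
  (1 / (4 * (p.1 ^ 2 + p.2 ^ 2))) *
    ((fderiv ℝ coverPar p X) ⬝ᵥ (fderiv ℝ coverPar p (-p.2, p.1)))

/-!
In polar coordinates the parametrization is `F = r (cos 2θ, sin 2θ, √3)`. The images of the
orthonormal polar frame under `DF`, namely `(cos 2θ, sin 2θ, √3)` and `(-2 sin 2θ, 2 cos 2θ, 0)`,
are orthogonal and both of length `2`: the cone has total angle `π`, so its double cover is flat and
`h` is four times the Euclidean metric. Hence `ω_h = (x dy - y dx) / r² = Im (dz / z)`, which is the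
derivative of any continuous angle along a curve, as the imaginary part of a local logarithm.
-/

open scoped Topology

lemma polar_sq_add_sq (r θ : ℝ) : (r * cos θ) ^ 2 + (r * sin θ) ^ 2 = r ^ 2 := by
  rw [mul_pow, mul_pow, ← mul_add, cos_sq_add_sin_sq, mul_one]

lemma polar_ne_zero {r : ℝ} (hr : r ≠ 0) (θ : ℝ) : (r * cos θ, r * sin θ) ≠ (0 : ℝ × ℝ) := by
  intro h
  obtain ⟨hcos, hsin⟩ := Prod.mk_eq_zero.1 h
  have hsq := polar_sq_add_sq r θ
  rw [hcos, hsin] at hsq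
  exact hr (by simpa using hsq.symm)

lemma exists_polar_of_ne_zero {p : ℝ × ℝ} (hp : p ≠ 0) :
    ∃ r θ : ℝ, 0 < r ∧ p = (r * cos θ, r * sin θ) := by
  refine ⟨‖Complex.equivRealProdCLM.symm p‖, (Complex.equivRealProdCLM.symm p).arg, ?_, ?_⟩
  · simpa only [norm_pos_iff, ne_eq, map_eq_zero_iff _ (ContinuousLinearEquiv.injective _)] using hp
  · rw [Complex.norm_mul_cos_arg, Complex.norm_mul_sin_arg]
    exact (Complex.equivRealProdCLM.apply_symm_apply p).symm

lemma sq_add_sq_pos_of_ne_zero {p : ℝ × ℝ} (hp : p ≠ 0) : 0 < p.1 ^ 2 + p.2 ^ 2 := by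
  obtain ⟨r, θ, hr, rfl⟩ := exists_polar_of_ne_zero hp
  exact (polar_sq_add_sq r θ).symm ▸ pow_pos hr 2

lemma exists_int_of_smul_cos_sin_eq {r α β : ℝ} (hr : r ≠ 0)
    (h : r • (cos α, sin α) = r • (cos β, sin β)) : ∃ k : ℤ, α - β = 2 * π * k := by
  have hunit : (cos α, sin α) = (cos β, sin β) := smul_right_injective _ hr h
  exact Real.Angle.angle_eq_iff_two_pi_dvd_sub.1
    (Real.Angle.cos_sin_inj (congrArg Prod.fst hunit) (congrArg Prod.snd hunit))

lemma coverPar_polar {r : ℝ} (hr : 0 ≤ r) (θ : ℝ) :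
    coverPar (r * cos θ, r * sin θ) = r • ![cos (2 * θ), sin (2 * θ), √3] := by
  have hsqrt : √((r * cos θ) ^ 2 + (r * sin θ) ^ 2) = r := by
    rw [polar_sq_add_sq, sqrt_sq hr]
  simp only [coverPar, hsqrt, cos_two_mul', sin_two_mul]
  ext i
  fin_cases i <;> simp <;> field_simp

lemma differentiableAt_coverPar {p : ℝ × ℝ} (hp : p ≠ 0) : DifferentiableAt ℝ coverPar p := by
  have hsq : p.1 ^ 2 + p.2 ^ 2 ≠ 0 := (sq_add_sq_pos_of_ne_zero hp).ne'
  have hsqrt : √(p.1 ^ 2 + p.2 ^ 2) ≠ 0 := (sqrt_pos.2 (sq_add_sq_pos_of_ne_zero hp)).ne'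
  refine differentiableAt_pi.2 fun i ↦ ?_
  fin_cases i <;>
    simp only [coverPar, Fin.zero_eta, Fin.mk_one, Fin.reduceFinMk, cons_val] <;>
    fun_prop (disch := assumption)

lemma fderiv_coverPar_radial {r : ℝ} (hr : 0 < r) (θ : ℝ) :
    fderiv ℝ coverPar (r * cos θ, r * sin θ) (cos θ, sin θ) =
      ![cos (2 * θ), sin (2 * θ), √3] := by
  have hray : HasDerivAt (fun t : ℝ ↦ (t * cos θ, t * sin θ)) (cos θ, sin θ) r :=
    (hasDerivAt_mul_const _).prodMk (hasDerivAt_mul_const _)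
  have hcomp := (differentiableAt_coverPar (polar_ne_zero hr.ne' θ)).hasFDerivAt.comp_hasDerivAt r
    hray
  have himage : HasDerivAt (fun t : ℝ ↦ t • ![cos (2 * θ), sin (2 * θ), √3])
      ![cos (2 * θ), sin (2 * θ), √3] r := by
    simpa using (hasDerivAt_id' r).smul_const ![cos (2 * θ), sin (2 * θ), √3]
  refine hcomp.unique (himage.congr_of_eventuallyEq ?_)
  filter_upwards [lt_mem_nhds hr] with t ht using coverPar_polar ht.le θ

lemma fderiv_coverPar_angular {r : ℝ} (hr : 0 < r) (θ : ℝ) :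
    fderiv ℝ coverPar (r * cos θ, r * sin θ) (-sin θ, cos θ) =
      ![-2 * sin (2 * θ), 2 * cos (2 * θ), 0] := by
  have hcircle : HasDerivAt (fun t : ℝ ↦ (r * cos t, r * sin t)) (r • (-sin θ, cos θ)) θ :=
    ((hasDerivAt_cos θ).const_mul r).prodMk ((hasDerivAt_sin θ).const_mul r)
  have hcomp := (differentiableAt_coverPar (polar_ne_zero hr.ne' θ)).hasFDerivAt.comp_hasDerivAt θ
    hcircle
  have himage : HasDerivAt (fun t : ℝ ↦ r • ![cos (2 * t), sin (2 * t), √3])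
      (r • ![-2 * sin (2 * θ), 2 * cos (2 * θ), 0]) θ := by
    refine HasDerivAt.const_smul r (hasDerivAt_pi.2 fun i ↦ ?_)
    have hdouble : HasDerivAt (fun t : ℝ ↦ 2 * t) 2 θ := hasDerivAt_const_mul 2
    fin_cases i
    · simpa [mul_comm] using hdouble.cos
    · simpa [mul_comm] using hdouble.sin
    · exact hasDerivAt_const θ (√3)
  refine smul_right_injective _ hr.ne' ?_
  simp only [← map_smul]
  exact hcomp.unique (himage.congr_of_eventuallyEq (.of_forall (coverPar_polar hr.le)))

lemma fderiv_coverPar_polar {r : ℝ} (hr : 0 < r) (θ : ℝ) (X : ℝ × ℝ) :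
    fderiv ℝ coverPar (r * cos θ, r * sin θ) X =
      (X.1 * cos θ + X.2 * sin θ) • ![cos (2 * θ), sin (2 * θ), √3] +
        (X.2 * cos θ - X.1 * sin θ) • ![-2 * sin (2 * θ), 2 * cos (2 * θ), 0] := by
  have hframe : X = (X.1 * cos θ + X.2 * sin θ) • (cos θ, sin θ) +
      (X.2 * cos θ - X.1 * sin θ) • (-sin θ, cos θ) := by
    ext <;> simp only [Prod.smul_mk, Prod.mk_add_mk, smul_eq_mul]
    · linear_combination -X.1 * cos_sq_add_sin_sq θ
    · linear_combination -X.2 * cos_sq_add_sin_sq θ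
  rw [← fderiv_coverPar_radial hr, ← fderiv_coverPar_angular hr, ← map_smul, ← map_smul,
    ← map_add, ← hframe]

theorem fderiv_coverPar_dotProduct {p : ℝ × ℝ} (hp : p ≠ 0) (X Y : ℝ × ℝ) :
    fderiv ℝ coverPar p X ⬝ᵥ fderiv ℝ coverPar p Y = 4 * (X.1 * Y.1 + X.2 * Y.2) := by
  obtain ⟨r, θ, hr, rfl⟩ := exists_polar_of_ne_zero hp
  set u : Fin 3 → ℝ := ![cos (2 * θ), sin (2 * θ), √3] with hu
  set v : Fin 3 → ℝ := ![-2 * sin (2 * θ), 2 * cos (2 * θ), 0] with hv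
  have huu : u ⬝ᵥ u = 4 := by
    simp only [hu, dotProduct, Fin.sum_univ_three, cons_val]
    linear_combination cos_sq_add_sin_sq (2 * θ) + sq_sqrt (zero_le_three (α := ℝ))
  have huv : u ⬝ᵥ v = 0 := by
    simp only [hu, hv, dotProduct, Fin.sum_univ_three, cons_val]
    ring
  have hvv : v ⬝ᵥ v = 4 := by
    simp only [hv, dotProduct, Fin.sum_univ_three, cons_val]
    linear_combination 4 * cos_sq_add_sin_sq (2 * θ)
  rw [fderiv_coverPar_polar hr, fderiv_coverPar_polar hr, ← hu, ← hv]
  simp only [add_dotProduct, dotProduct_add, smul_dotProduct, dotProduct_smul, smul_eq_mul,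
    dotProduct_comm v u, huu, huv, hvv]
  linear_combination 4 * (X.1 * Y.1 + X.2 * Y.2) * cos_sq_add_sin_sq θ

theorem connFormCover_eq {p : ℝ × ℝ} (hp : p ≠ 0) (X : ℝ × ℝ) :
    connFormCover p X = (p.1 * X.2 - p.2 * X.1) / (p.1 ^ 2 + p.2 ^ 2) := by
  have hsq : p.1 ^ 2 + p.2 ^ 2 ≠ 0 := (sq_add_sq_pos_of_ne_zero hp).ne'
  rw [connFormCover, fderiv_coverPar_dotProduct hp]
  field_simp
  ring

lemma continuousOn_connFormCover {α : Type*} [TopologicalSpace α] {s : Set α} {p X : α → ℝ × ℝ}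
    (hp : ContinuousOn p s) (hX : ContinuousOn X s) (hp₀ : ∀ t ∈ s, p t ≠ 0) :
    ContinuousOn (fun t ↦ connFormCover (p t) (X t)) s := by
  have hsq : ∀ t ∈ s, (p t).1 ^ 2 + (p t).2 ^ 2 ≠ 0 := fun t ht ↦
    (sq_add_sq_pos_of_ne_zero (hp₀ t ht)).ne'
  have hquot : ContinuousOn (fun t ↦ ((p t).1 * (X t).2 - (p t).2 * (X t).1) /
      ((p t).1 ^ 2 + (p t).2 ^ 2)) s := by fun_prop (disch := assumption)
  exact hquot.congr fun t ht ↦ connFormCover_eq (hp₀ t ht) (X t)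

theorem hasDerivAt_of_eq_norm_mul_exp {z : ℝ → ℂ} {z' : ℂ} {φ : ℝ → ℝ} {t : ℝ}
    (hz : HasDerivAt z z' t) (hz₀ : z t ≠ 0) (hφ : ContinuousAt φ t)
    (hlift : ∀ᶠ u in 𝓝 t, z u = ‖z u‖ * Complex.exp (φ u * Complex.I)) :
    HasDerivAt φ (z' / z t).im t := by
  -- Rotating `z t` onto the positive axis makes the principal logarithm smooth near `t`.
  set w : ℂ := Complex.exp (-(φ t * Complex.I)) with hw
  have hw₀ : w ≠ 0 := Complex.exp_ne_zero _
  have hrot : ∀ᶠ u in 𝓝 t, z u * w = ‖z u‖ * Complex.exp ((φ u - φ t : ℝ) * Complex.I) := by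
    filter_upwards [hlift] with u hu
    conv_lhs => rw [hu, hw, mul_assoc, ← Complex.exp_add]
    congr 2
    push_cast
    ring
  have hslit : z t * w ∈ Complex.slitPlane := by
    rw [hrot.self_of_nhds]
    simpa using hz₀
  have hlog : HasDerivAt (fun u ↦ (Complex.log (z u * w)).im) (z' / z t).im t := by
    have h := Complex.imCLM.hasFDerivAt.comp_hasDerivAt t ((hz.mul_const w).clog_real hslit)
    rwa [mul_div_mul_right _ _ hw₀] at h
  have hnear : ∀ᶠ u in 𝓝 t, φ u - φ t ∈ Set.Ioo (-π) π :=
    (hφ.sub continuousAt_const).eventually_mem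
      (Ioo_mem_nhds (by simp [pi_pos]) (by simp [pi_pos]))
  refine (hlog.add_const (φ t)).congr_of_eventuallyEq ?_
  filter_upwards [hrot, hnear, hz.continuousAt.eventually_ne hz₀] with u hu hmem hu₀
  rw [Complex.log_im, hu, Complex.arg_real_mul _ (norm_pos_iff.2 hu₀), Complex.arg_exp_mul_I,
    (toIocMod_eq_self two_pi_pos).2 ⟨hmem.1, by linarith [hmem.2]⟩, sub_add_cancel]

theorem hasDerivAt_angle_connFormCover {γ : ℝ → ℝ × ℝ} {v : ℝ × ℝ} {φ : ℝ → ℝ} {t : ℝ}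
    (hγ : HasDerivAt γ v t) (hγ₀ : γ t ≠ 0) (hφ : ContinuousAt φ t)
    (hlift : ∀ᶠ u in 𝓝 t, γ u = √((γ u).1 ^ 2 + (γ u).2 ^ 2) • (cos (φ u), sin (φ u))) :
    HasDerivAt φ (connFormCover (γ t) v) t := by
  let e := Complex.equivRealProdCLM.symm
  have hz : HasDerivAt (fun u ↦ e (γ u)) (e v) t :=
    e.toContinuousLinearMap.hasFDerivAt.comp_hasDerivAt t hγ
  have hz₀ : e (γ t) ≠ 0 := (map_ne_zero_iff e e.injective).2 hγ₀
  have hform : connFormCover (γ t) v = (e v / e (γ t)).im := by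
    rw [connFormCover_eq hγ₀]
    have hre (p : ℝ × ℝ) : (e p).re = p.1 := by simp [e]
    have him (p : ℝ × ℝ) : (e p).im = p.2 := by simp [e]
    rw [Complex.div_im, Complex.normSq_apply, hre, hre, him, him]
    ring
  rw [hform]
  have hnorm (p : ℝ × ℝ) : ‖e p‖ = √(p.1 ^ 2 + p.2 ^ 2) := by
    rw [Complex.equivRealProdCLM_symm_apply, Complex.norm_add_mul_I]
  refine hasDerivAt_of_eq_norm_mul_exp hz hz₀ hφ (hlift.mono fun u hu ↦ ?_)
  have hpolar : e (cos (φ u), sin (φ u)) = Complex.exp (φ u * Complex.I) := by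
    rw [Complex.equivRealProdCLM_symm_apply, Complex.exp_mul_I, Complex.ofReal_cos,
      Complex.ofReal_sin]
  rw [hnorm, ← hpolar, ← Complex.real_smul, ← map_smul, ← hu]

theorem cover_geometric_phase_eq_angle_variation_general
    {a b : ℝ} (hab : a ≤ b) {s : Set ℝ} (hs : s.Countable)
    {γ γ' : ℝ → ℝ × ℝ} {φ : ℝ → ℝ}
    (hγ₀ : ∀ t ∈ Set.Icc a b, γ t ≠ 0)
    (hγder : ∀ t ∈ Set.Ioo a b \ s, HasDerivAt γ (γ' t) t)
    (hφ : ContinuousOn φ (Set.Icc a b))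
    (hint : IntervalIntegrable (fun t ↦ connFormCover (γ t) (γ' t)) MeasureTheory.volume a b)
    (hlift : ∀ t ∈ Set.Icc a b,
      γ t = √((γ t).1 ^ 2 + (γ t).2 ^ 2) • (cos (φ t), sin (φ t))) :
    (∫ t in a..b, connFormCover (γ t) (γ' t)) = φ b - φ a ∧
    (γ a = γ b → ∃ k : ℤ, φ b - φ a = 2 * π * k ∧
      (∫ t in a..b, connFormCover (γ t) (γ' t)) = 2 * π * k) := by
  have hderiv : ∀ t ∈ Set.Ioo a b \ s, HasDerivAt φ (connFormCover (γ t) (γ' t)) t := by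
    intro t ht
    have hnhds : Set.Icc a b ∈ 𝓝 t := Icc_mem_nhds ht.1.1 ht.1.2
    exact hasDerivAt_angle_connFormCover (hγder t ht) (hγ₀ t (mem_of_mem_nhds hnhds))
      (hφ.continuousAt hnhds) (Filter.mem_of_superset hnhds hlift)
  have hphase : (∫ t in a..b, connFormCover (γ t) (γ' t)) = φ b - φ a :=
    MeasureTheory.integral_eq_of_hasDerivAt_off_countable_of_le φ _ hab hs hφ hderiv hint
  refine ⟨hphase, fun hclosed ↦ ?_⟩
  have hb : b ∈ Set.Icc a b := Set.right_mem_Icc.2 hab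
  have hend := hlift a (Set.left_mem_Icc.2 hab)
  rw [hclosed] at hend
  obtain ⟨k, hk⟩ := exists_int_of_smul_cos_sin_eq
    (sqrt_pos.2 (sq_add_sq_pos_of_ne_zero (hγ₀ b hb))).ne' ((hlift b hb).symm.trans hend)
  exact ⟨k, hk, hphase.trans hk⟩

/-- on the branched double cover the connection form is `dφ`:
the geometric phase along a C¹ curve equals the total angle variation
`φ(1) − φ(0)`, and for closed curves it is `2π` times the integer winding
number (so the holonomy on `ℝ² \ {0}` is trivial). -/
theorem cover_geometric_phase_eq_angle_variation
    (γ γ' : ℝ → ℝ × ℝ) (φ φ' : ℝ → ℝ)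
    (hγ0 : ∀ t ∈ Set.Icc (0 : ℝ) 1, γ t ≠ 0)
    (hγder : ∀ t ∈ Set.Icc (0 : ℝ) 1, HasDerivAt γ (γ' t) t)
    (hγ'cont : ContinuousOn γ' (Set.Icc 0 1))
    (hφder : ∀ t ∈ Set.Icc (0 : ℝ) 1, HasDerivAt φ (φ' t) t)
    (hφ'cont : ContinuousOn φ' (Set.Icc 0 1))
    (hlift : ∀ t ∈ Set.Icc (0 : ℝ) 1,
      γ t = Real.sqrt ((γ t).1 ^ 2 + (γ t).2 ^ 2) • (Real.cos (φ t), Real.sin (φ t))) :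
    (∫ t in (0 : ℝ)..1, connFormCover (γ t) (γ' t)) = φ 1 - φ 0 ∧
    (γ 0 = γ 1 → ∃ k : ℤ, φ 1 - φ 0 = 2 * π * k ∧
      (∫ t in (0 : ℝ)..1, connFormCover (γ t) (γ' t)) = 2 * π * k) := by
  have hγcont : ContinuousOn γ (Set.Icc 0 1) := HasDerivAt.continuousOn hγder
  exact cover_geometric_phase_eq_angle_variation_general zero_le_one Set.countable_empty hγ0
    (fun t ht ↦ hγder t (Set.Ioo_subset_Icc_self ht.1)) (HasDerivAt.continuousOn hφder)
    ((continuousOn_connFormCover hγcont hγ'cont hγ0).intervalIntegrable_of_Icc zero_le_one) hlift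
end
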